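/- If the edge-probability function satisfies p(n) ≥ ln n / n and t = t(n) is a function with t(n) ≤ n·p(n)/100, then with high probability a graph G sampled from G(n,p) contains no non-empty path of length (number of edges) at most 2·ln n/(3·ln ln n) whose two (possibly identical) endpoints both lie in D_t(G); in particular, w.h.p. every two distinct vertices of D_t(G) are at distance greater than 2·ln n/(3·ln ln n) in G and no vertex of D_t(G) lies on a cycle of length at most 2·ln n/(3·ln ln n). -/

import Mathlib

open Filter Finset SimpleGraph
open scoped Classical

/-- The probability weight of a particular graph `G` on `[n]` under `G(n,p)`. -/
noncomputable def gnpWeight (n : ℕ) (p : ℝ) (G : SimpleGraph (Fin n)) : ℝ :=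
  p ^ G.edgeFinset.card * (1 - p) ^ (n.choose 2 - G.edgeFinset.card)

/-- The probability that a random graph `G ~ G(n,p)` satisfies the predicate `A`. -/
noncomputable def gnpProb (n : ℕ) (p : ℝ) (A : SimpleGraph (Fin n) → Prop) : ℝ :=
  ∑ G : SimpleGraph (Fin n), if A G then gnpWeight n p G else 0

/-- A sequence of graph properties holds with high probability in `G(n, p n)`. -/
def WHP (p : ℕ → ℝ) (A : ∀ n : ℕ, SimpleGraph (Fin n) → Prop) : Prop :=
  Tendsto (fun n => gnpProb n (p n) (A n)) atTop (nhds 1)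

/-- Number of edges of a graph. -/
noncomputable def edgeCount {V : Type*} [Fintype V] (G : SimpleGraph V) : ℕ :=
  G.edgeFinset.card

/-- Number of edges with both endpoints in `U`. -/
noncomputable def eIn {V : Type*} [Fintype V] (G : SimpleGraph V) (U : Finset V) : ℕ :=
  (G.edgeFinset.filter (fun e => ∀ v ∈ e, v ∈ U)).card

/-- Number of edges with one endpoint in `U` and the other in `Z` (for disjoint `U`, `Z`). -/
noncomputable def eBetween {V : Type*} [Fintype V] (G : SimpleGraph V) (U Z : Finset V) : ℕ :=
  ((U ×ˢ Z).filter (fun q => G.Adj q.1 q.2)).card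

/-- External neighbourhood of a vertex set. -/
noncomputable def extNbhd {V : Type*} [Fintype V] (G : SimpleGraph V) (U : Finset V) : Finset V :=
  Finset.univ.filter (fun v => v ∉ U ∧ ∃ u ∈ U, G.Adj u v)

/-- `G` is an `(R, f)`-expander: every set `U` with `|U| ≤ R` satisfies `|N(U)| ≥ f(|U|)·|U|`. -/
def IsExpander {V : Type*} [Fintype V] (G : SimpleGraph V) (R : ℝ) (f : ℕ → ℝ) : Prop :=
  ∀ U : Finset V, U.Nonempty → (U.card : ℝ) ≤ R →
    f U.card * U.card ≤ ((extNbhd G U).card : ℝ)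

/-- The expansion function `f_β` on `{1, …, ⌊β n₁⌋}`. -/
noncomputable def fBeta (β : ℝ) (n1 : ℕ) (t : ℕ) : ℝ :=
  if t = Nat.floor (β * n1) then 2 * (1 + 39 * β) / (3 * β)
  else if (t : ℝ) < (n1 : ℝ) ^ (0.1 : ℝ) then Real.log n1 ^ (0.8 : ℝ)
  else 11

/-- `G₁` is `(n₁, d, β)`-quasi-random. -/
def QuasiRandom {V : Type*} [Fintype V] (G1 : SimpleGraph V) (n1 : ℕ) (d β : ℝ) : Prop :=
  (∀ v : V, d / 150 ≤ (G1.degree v : ℝ)) ∧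
  (∀ U : Finset V, (U.card : ℝ) < (n1 : ℝ) ^ (0.11 : ℝ) * Real.log n1 →
    (eIn G1 U : ℝ) ≤ d ^ (0.13 : ℝ) * U.card) ∧
  (∀ U : Finset V, (U.card : ℝ) < 12 * β * n1 →
    (eIn G1 U : ℝ) ≤ 50 * β * d * U.card) ∧
  (∀ U Z : Finset V, Disjoint U Z → U.card = Nat.floor (β * n1) →
    Z.card = Nat.floor ((1 / 3 - 27 * β) * n1) →
    (n1 : ℝ) * Real.log (Real.log n1) ≤ (eBetween G1 U Z : ℝ))

/-- Longest path length in `G`. -/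
noncomputable def longestPath {V : Type*} [Fintype V] (G : SimpleGraph V) : ℕ :=
  sSup {l : ℕ | ∃ (u v : V) (q : G.Walk u v), q.IsPath ∧ q.length = l}

/-- `{u, v}` is a booster with respect to `Γ`. -/
def IsBooster {V : Type*} [Fintype V] (Γ : SimpleGraph V) (u v : V) : Prop :=
  u ≠ v ∧ ¬ Γ.Adj u v ∧
    ((Γ ⊔ fromEdgeSet {s(u, v)}).IsHamiltonian ∨
      longestPath Γ < longestPath (Γ ⊔ fromEdgeSet {s(u, v)}))

/-- The booster set `B_Γ(v)`. -/
noncomputable def boosterSet {V : Type*} [Fintype V] (Γ : SimpleGraph V) (v : V) : Finset V :=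
  Finset.univ.filter (fun w => IsBooster Γ v w)

/-- Membership in the family `𝓛(n, β)` with witnessing partition `V = V₁ ∪ D`. -/
def InFamilyL (n : ℕ) (β : ℝ) (G : SimpleGraph (Fin n)) (V1 D : Finset (Fin n)) : Prop :=
  Disjoint V1 D ∧ V1 ∪ D = Finset.univ ∧
  ((D.card : ℝ) ≤ (n : ℝ) ^ (0.09 : ℝ)) ∧
  (∀ u ∈ D, 2 ≤ (G.neighborFinset u ∩ V1).card) ∧
  (∀ u ∈ D, ∀ v ∈ D, ∀ q : G.Walk u v, q.IsPath → 0 < q.length →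
    2 * Real.log n / (3 * Real.log (Real.log n)) < (q.length : ℝ)) ∧
  (∀ u ∈ D, ∀ q : G.Walk u u, q.IsCycle →
    2 * Real.log n / (3 * Real.log (Real.log n)) < (q.length : ℝ)) ∧
  IsExpander (G.induce (V1 : Set (Fin n))) (β * V1.card) (fBeta β V1.card)

/-- The set `D_t(G)` of vertices of degree less than `t`. -/
noncomputable def lowDegSet (n : ℕ) (t : ℝ) (G : SimpleGraph (Fin n)) : Finset (Fin n) :=
  Finset.univ.filter (fun v => (G.degree v : ℝ) < t)


lemma sum_graphs {n : ℕ} (F : Finset (Sym2 (Fin n)) → ℝ) :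
    ∑ G : SimpleGraph (Fin n), F G.edgeFinset =
      ∑ A ∈ (⊤ : SimpleGraph (Fin n)).edgeFinset.powerset, F A := by
  refine Finset.sum_bij' (fun G _ => G.edgeFinset)
    (fun A _ => SimpleGraph.fromEdgeSet (A : Set (Sym2 (Fin n)))) ?_ ?_ ?_ ?_ ?_
  · intro G _
    rw [Finset.mem_powerset]
    exact SimpleGraph.edgeFinset_mono le_top
  · intro A _
    exact Finset.mem_univ _
  · intro G _
    simp
  · intro A hA
    rw [Finset.mem_powerset] at hA
    ext e
    refine (@SimpleGraph.mem_edgeFinset _ _ _ (_)).trans ?_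
    rw [SimpleGraph.edgeSet_fromEdgeSet]
    constructor
    · intro h
      exact h.1
    · intro h
      refine ⟨h, ?_⟩
      have := hA h
      rw [SimpleGraph.mem_edgeFinset] at this
      exact SimpleGraph.not_isDiag_of_mem_edgeSet _ this
  · intro G _
    rfl

lemma card_top_edges (n : ℕ) : (⊤ : SimpleGraph (Fin n)).edgeFinset.card = n.choose 2 := by
  have := SimpleGraph.card_edgeFinset_top_eq_card_choose_two (V := Fin n)
  rw [Fintype.card_fin] at this
  rw [← this]

lemma core_eq {n : ℕ} (p s : ℝ) (S T : Finset (Sym2 (Fin n)))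
    (hS : S ⊆ (⊤ : SimpleGraph (Fin n)).edgeFinset) :
    ∑ G : SimpleGraph (Fin n), (if S ⊆ G.edgeFinset then
        gnpWeight n p G * s ^ (T ∩ G.edgeFinset).card else 0) =
    ∏ e ∈ (⊤ : SimpleGraph (Fin n)).edgeFinset,
      (p * (if e ∈ T then s else 1) + (1 - p) * (if e ∈ S then 0 else 1)) := by
  unfold gnpWeight
  rw [sum_graphs (fun A => if S ⊆ A then
    p ^ A.card * (1 - p) ^ (n.choose 2 - A.card) * s ^ (T ∩ A).card else 0), Finset.prod_add]
  refine Finset.sum_congr rfl ?_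
  intro A hA
  rw [Finset.mem_powerset] at hA
  rw [Finset.prod_mul_distrib, Finset.prod_mul_distrib, Finset.prod_const, Finset.prod_const,
    Finset.card_sdiff_of_subset hA, card_top_edges]
  have h1 : (∏ e ∈ A, if e ∈ T then s else 1) = s ^ (T ∩ A).card := by
    rw [Finset.prod_ite, Finset.prod_const, Finset.prod_const_one, mul_one,
      Finset.filter_mem_eq_inter, Finset.inter_comm]
  rw [h1]
  split_ifs with h
  · have : (∏ e ∈ (⊤ : SimpleGraph (Fin n)).edgeFinset \ A, if e ∈ S then (0:ℝ) else 1) = 1 := by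
      refine Finset.prod_eq_one ?_
      intro e he
      rw [Finset.mem_sdiff] at he
      rw [if_neg (fun h' => he.2 (h h'))]
    rw [this]
    ring
  · obtain ⟨e, he, hne⟩ := Finset.not_subset.mp h
    have : (∏ e ∈ (⊤ : SimpleGraph (Fin n)).edgeFinset \ A, if e ∈ S then (0:ℝ) else 1) = 0 :=
      Finset.prod_eq_zero (Finset.mem_sdiff.mpr ⟨hS he, hne⟩) (if_pos he)
    rw [this]
    ring

lemma sum_weight (n : ℕ) (p : ℝ) : ∑ G : SimpleGraph (Fin n), gnpWeight n p G = 1 := by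
  have := core_eq (n := n) p 1 ∅ ∅ (Finset.empty_subset _)
  simpa using this

lemma weight_nonneg {n : ℕ} {p : ℝ} (h0 : 0 ≤ p) (h1 : p ≤ 1) (G : SimpleGraph (Fin n)) :
    0 ≤ gnpWeight n p G := by
  unfold gnpWeight
  have : 0 ≤ 1 - p := by linarith
  positivity

lemma core_le {n : ℕ} {p s : ℝ} (h0 : 0 ≤ p) (h1 : p ≤ 1) (hs0 : 0 ≤ s) (hs1 : s ≤ 1)
    (S T : Finset (Sym2 (Fin n)))
    (hS : S ⊆ (⊤ : SimpleGraph (Fin n)).edgeFinset)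
    (hT : T ⊆ (⊤ : SimpleGraph (Fin n)).edgeFinset) :
    ∑ G : SimpleGraph (Fin n), (if S ⊆ G.edgeFinset then
        gnpWeight n p G * s ^ (T ∩ G.edgeFinset).card else 0) ≤
    p ^ S.card * (1 - p * (1 - s)) ^ (T \ S).card := by
  rw [core_eq p s S T hS]
  have hq : 0 ≤ 1 - p * (1 - s) := by nlinarith
  have e1 : p ^ S.card * (1 - p * (1 - s)) ^ (T \ S).card =
      ∏ e ∈ (⊤ : SimpleGraph (Fin n)).edgeFinset,
        ((if e ∈ S then p else 1) * (if e ∈ T \ S then (1 - p * (1 - s)) else 1)) := by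
    rw [Finset.prod_mul_distrib, Finset.prod_ite, Finset.prod_ite]
    simp only [Finset.prod_const, one_pow, mul_one]
    rw [Finset.filter_mem_eq_inter, Finset.filter_mem_eq_inter, Finset.inter_eq_right.mpr hS,
      Finset.inter_eq_right.mpr (Finset.sdiff_subset.trans hT)]
  rw [e1]
  have hp' : 0 ≤ 1 - p := by linarith
  refine Finset.prod_le_prod ?_ ?_
  · intro e _
    split_ifs <;> positivity
  · intro e _
    by_cases hs : e ∈ S <;> by_cases ht : e ∈ T <;> simp [hs, ht] <;> nlinarith

/-- Chernoff-type bound. -/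
lemma prob_le {n : ℕ} {p : ℝ} (h0 : 0 ≤ p) (h1 : p ≤ 1)
    (S T : Finset (Sym2 (Fin n)))
    (hS : S ⊆ (⊤ : SimpleGraph (Fin n)).edgeFinset)
    (hT : T ⊆ (⊤ : SimpleGraph (Fin n)).edgeFinset) (m a : ℝ) (ha : a ≤ (T \ S).card) :
    gnpProb n p (fun G => S ⊆ G.edgeFinset ∧ ((T ∩ G.edgeFinset).card : ℝ) ≤ m) ≤
    p ^ S.card * Real.exp (5 * m - 0.99 * p * a) := by
  have hs1 : Real.exp (-5) ≤ 0.01 := by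
    rw [Real.exp_neg, inv_le_comm₀ (Real.exp_pos _) (by norm_num)]
    have := Real.exp_one_gt_d9
    have h5 : Real.exp 5 = Real.exp 1 ^ 5 := by rw [← Real.exp_nat_mul]; norm_num
    rw [h5]
    calc (0.01:ℝ)⁻¹ ≤ 2.7182818283 ^ 5 := by norm_num
      _ ≤ _ := by gcongr
  have key := core_le h0 h1 (Real.exp_pos (-5)).le (by linarith) S T hS hT
  have step : gnpProb n p (fun G => S ⊆ G.edgeFinset ∧ ((T ∩ G.edgeFinset).card : ℝ) ≤ m) ≤
      Real.exp (5 * m) * ∑ G : SimpleGraph (Fin n), (if S ⊆ G.edgeFinset then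
        gnpWeight n p G * Real.exp (-5) ^ (T ∩ G.edgeFinset).card else 0) := by
    unfold gnpProb
    rw [Finset.mul_sum]
    refine Finset.sum_le_sum ?_
    intro G _
    have hw := weight_nonneg h0 h1 G
    by_cases hSG : S ⊆ G.edgeFinset
    · rw [if_pos hSG]
      split_ifs with h
      · have : 1 ≤ Real.exp (5 * m) * Real.exp (-5) ^ (T ∩ G.edgeFinset).card := by
          rw [← Real.exp_nat_mul, ← Real.exp_add, Real.one_le_exp_iff]
          linarith [h.2]
        nlinarith
      · positivity
    · rw [if_neg hSG, if_neg (fun h => hSG h.1), mul_zero]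
  refine step.trans ?_
  have hq0 : 0 ≤ 1 - p * (1 - Real.exp (-5)) := by nlinarith [Real.exp_pos (-5)]
  have hq : (1 - p * (1 - Real.exp (-5))) ^ (T \ S).card ≤ Real.exp (-(0.99 * p * a)) := by
    calc (1 - p * (1 - Real.exp (-5))) ^ (T \ S).card
        ≤ (Real.exp (-(0.99 * p))) ^ (T \ S).card := by
          refine pow_le_pow_left₀ hq0 ?_ _
          have := Real.add_one_le_exp (-(0.99 * p))
          nlinarith
      _ = Real.exp ((T \ S).card * (-(0.99 * p))) := by rw [Real.exp_nat_mul]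
      _ ≤ _ := by
          rw [Real.exp_le_exp]
          nlinarith
  calc _ ≤ Real.exp (5 * m) * (p ^ S.card * Real.exp (-(0.99 * p * a))) := by
        refine mul_le_mul_of_nonneg_left (key.trans ?_) (Real.exp_pos _).le
        gcongr
    _ = _ := by
        rw [sub_eq_add_neg, Real.exp_add]; ring

lemma card_walks {n : ℕ} (k : ℕ) (u v : Fin n) :
    ((⊤ : SimpleGraph (Fin n)).finsetWalkLength (k + 1) u v).card ≤ n ^ k := by
  induction k generalizing u with
  | zero =>
    rw [pow_zero, Finset.card_le_one]
    intro a ha b hb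
    rw [SimpleGraph.mem_finsetWalkLength_iff] at ha hb
    cases a with
    | nil => simp at ha
    | cons h a =>
      cases b with
      | nil => simp at hb
      | cons h' b =>
        cases a with
        | nil =>
          cases b with
          | nil => rfl
          | cons _ _ => simp at hb
        | cons _ _ => simp at ha
  | succ k ih =>
    rw [SimpleGraph.finsetWalkLength]
    refine Finset.card_biUnion_le.trans ?_
    calc _ ≤ ∑ w : (⊤ : SimpleGraph (Fin n)).neighborSet u, n ^ k := by
          refine Finset.sum_le_sum ?_
          intro w _
          rw [Finset.card_map]
          exact ih w
      _ ≤ _ := by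
          rw [Finset.sum_const, smul_eq_mul, pow_succ, mul_comm]
          refine Nat.mul_le_mul_left _ ?_
          rw [Finset.card_univ]
          refine (Fintype.card_subtype_le _).trans ?_
          simp

/-- Edges touching `u` or `v`. -/
noncomputable def touch {n : ℕ} (u v : Fin n) : Finset (Sym2 (Fin n)) :=
  (⊤ : SimpleGraph (Fin n)).edgeFinset.filter (fun e => u ∈ e ∨ v ∈ e)

lemma touch_inter {n : ℕ} (u v : Fin n) (G : SimpleGraph (Fin n)) :
    touch u v ∩ G.edgeFinset ⊆ G.incidenceFinset u ∪ G.incidenceFinset v := by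
  intro e he
  simp only [touch, Finset.mem_inter, Finset.mem_filter] at he
  rw [Finset.mem_union, SimpleGraph.mem_incidenceFinset, SimpleGraph.mem_incidenceFinset]
  rw [SimpleGraph.mem_edgeFinset (G := G)] at he
  exact he.1.2.imp (fun h => ⟨he.2, h⟩) (fun h => ⟨he.2, h⟩)

lemma touch_eq {n : ℕ} (u v : Fin n) :
    touch u v = (⊤ : SimpleGraph (Fin n)).incidenceFinset u ∪
      (⊤ : SimpleGraph (Fin n)).incidenceFinset v := by
  ext e
  simp only [touch, Finset.mem_filter, Finset.mem_union, SimpleGraph.mem_incidenceFinset,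
    SimpleGraph.incidenceSet, Set.mem_sep_iff, SimpleGraph.mem_edgeFinset]
  tauto

lemma card_inc {n : ℕ} (u : Fin n) :
    ((⊤ : SimpleGraph (Fin n)).incidenceFinset u).card = n - 1 := by
  rw [SimpleGraph.card_incidenceFinset_eq_degree]
  have := SimpleGraph.complete_graph_degree u
  rw [Fintype.card_fin] at this
  rw [← this]

lemma touch_card_self {n : ℕ} (u : Fin n) : (touch u u).card = n - 1 := by
  rw [touch_eq, Finset.union_self, card_inc]

lemma touch_card {n : ℕ} (u v : Fin n) (h : u ≠ v) : 2 * (n - 1) ≤ (touch u v).card + 1 := by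
  rw [touch_eq]
  have h1 := Finset.card_union_add_card_inter ((⊤ : SimpleGraph (Fin n)).incidenceFinset u)
    ((⊤ : SimpleGraph (Fin n)).incidenceFinset v)
  have h2 : ((⊤ : SimpleGraph (Fin n)).incidenceFinset u ∩
    (⊤ : SimpleGraph (Fin n)).incidenceFinset v).card ≤ 1 := by
    have : ((⊤ : SimpleGraph (Fin n)).incidenceFinset u ∩
      (⊤ : SimpleGraph (Fin n)).incidenceFinset v) ⊆ {s(u, v)} := by
      intro e he
      rw [Finset.mem_inter, SimpleGraph.mem_incidenceFinset, SimpleGraph.mem_incidenceFinset] at he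
      rw [Finset.mem_singleton]
      exact SimpleGraph.incidenceSet_inter_incidenceSet_subset _ h he
    exact (Finset.card_le_card this).trans (by simp)
  rw [card_inc, card_inc] at h1
  omega

lemma union_bound {n : ℕ} {p : ℝ} (h0 : 0 ≤ p) (h1 : p ≤ 1) {ι : Type*} (I : Finset ι)
    (B : ι → SimpleGraph (Fin n) → Prop) :
    gnpProb n p (fun G => ∃ i ∈ I, B i G) ≤ ∑ i ∈ I, gnpProb n p (B i) := by
  unfold gnpProb
  rw [Finset.sum_comm]
  refine Finset.sum_le_sum ?_
  intro G _
  have hw := weight_nonneg h0 h1 G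
  have hnn : ∀ i ∈ I, 0 ≤ (if B i G then gnpWeight n p G else 0) := by
    intro i _
    split_ifs
    · exact hw
    · exact le_rfl
  by_cases h : ∃ i ∈ I, B i G
  · rw [if_pos h]
    obtain ⟨i, hi, hB⟩ := h
    have := Finset.single_le_sum hnn hi
    rwa [if_pos hB] at this
  · rw [if_neg h]
    exact Finset.sum_nonneg hnn

lemma gnpProb_mono {n : ℕ} {p : ℝ} (h0 : 0 ≤ p) (h1 : p ≤ 1)
    {A B : SimpleGraph (Fin n) → Prop} (h : ∀ G, A G → B G) :
    gnpProb n p A ≤ gnpProb n p B := by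
  unfold gnpProb
  refine Finset.sum_le_sum ?_
  intro G _
  have hw := weight_nonneg h0 h1 G
  by_cases hA : A G
  · rw [if_pos hA, if_pos (h G hA)]
  · rw [if_neg hA]
    split_ifs
    · exact hw
    · exact le_rfl

lemma gnpProb_not {n : ℕ} {p : ℝ} (A : SimpleGraph (Fin n) → Prop) :
    gnpProb n p A = 1 - gnpProb n p (fun G => ¬ A G) := by
  rw [eq_sub_iff_add_eq, ← sum_weight n p]
  unfold gnpProb
  rw [← Finset.sum_add_distrib]
  refine Finset.sum_congr rfl ?_
  intro G _
  by_cases hA : A G <;> simp [hA]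

lemma gnpProb_nonneg {n : ℕ} {p : ℝ} (h0 : 0 ≤ p) (h1 : p ≤ 1)
    (A : SimpleGraph (Fin n) → Prop) : 0 ≤ gnpProb n p A := by
  unfold gnpProb
  refine Finset.sum_nonneg ?_
  intro G _
  split_ifs
  · exact weight_nonneg h0 h1 G
  · exact le_rfl

lemma analytic {x d c : ℝ} {j : ℕ} (hx : 1 ≤ Real.log x) (hx0 : 0 < x) (hd : x ≤ d)
    (hc : 2 / 3 ≤ c) (hj : (j : ℝ) ≤ 2 * x / (3 * Real.log x)) :
    d ^ j ≤ Real.exp ((2 / 3 - c) * x + c * d) := by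
  have hd0 : 0 < d := by linarith
  have e : d ^ j = Real.exp (j * Real.log d) := by
    rw [Real.exp_nat_mul, Real.exp_log hd0]
  rw [e, Real.exp_le_exp]
  have h1 : Real.log (d / x) ≤ d / x - 1 := Real.log_le_sub_one_of_pos (by positivity)
  rw [Real.log_div hd0.ne' hx0.ne'] at h1
  have hlogd : Real.log x ≤ Real.log d := Real.log_le_log hx0 hd
  set L := 2 * x / (3 * Real.log x) with hL
  have hLx : L * Real.log x = 2 / 3 * x := by
    rw [hL]; field_simp
  have hL0 : 0 ≤ L := by positivity
  have hL2 : L ≤ 2 / 3 * x := by nlinarith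
  have h2 : (j : ℝ) * Real.log d ≤ L * Real.log d :=
    mul_le_mul_of_nonneg_right hj (by linarith)
  have h3 : L * (Real.log d - Real.log x) ≤ L * (d / x - 1) :=
    mul_le_mul_of_nonneg_left h1 hL0
  have hdx : 0 ≤ d / x - 1 := by
    rw [sub_nonneg, le_div_iff₀ hx0]; linarith
  have h4 : L * (d / x - 1) ≤ 2 / 3 * x * (d / x - 1) :=
    mul_le_mul_of_nonneg_right hL2 hdx
  have h5 : 2 / 3 * x * (d / x - 1) = 2 / 3 * (d - x) := by field_simp
  nlinarith

/-- The bad event for a given trail (in the complete graph). -/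
def badTrail {n : ℕ} (d : ℝ) (u v : Fin n) (w : (⊤ : SimpleGraph (Fin n)).Walk u v)
    (G : SimpleGraph (Fin n)) : Prop :=
  w.edges.toFinset ⊆ G.edgeFinset ∧
    ((touch u v ∩ G.edgeFinset).card : ℝ) ≤ (if u = v then d / 100 else d / 50)

lemma badTrail_prob {n : ℕ} {p : ℝ} (h0 : 0 ≤ p) (h1 : p ≤ 1) {u v : Fin n}
    (w : (⊤ : SimpleGraph (Fin n)).Walk u v) (hw : w.IsTrail)
    (hn : 1000 ≤ n) (hlen : (w.length : ℝ) ≤ 0.001 * n) :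
    gnpProb n p (badTrail (n * p) u v w) ≤
      p ^ w.length * (if u = v then Real.exp (-(0.93 * (n * p)))
        else Real.exp (-(1.87 * (n * p)))) := by
  have hS : w.edges.toFinset ⊆ (⊤ : SimpleGraph (Fin n)).edgeFinset := by
    intro e he
    rw [List.mem_toFinset] at he
    rw [SimpleGraph.mem_edgeFinset]
    exact w.edges_subset_edgeSet he
  have hT : touch u v ⊆ (⊤ : SimpleGraph (Fin n)).edgeFinset := Finset.filter_subset _ _
  have hc : w.edges.toFinset.card = w.length := by
    rw [List.toFinset_card_of_nodup hw.edges_nodup, SimpleGraph.Walk.length_edges]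
  have hsd : ((touch u v).card : ℝ) ≤ ((touch u v \ w.edges.toFinset).card : ℝ) + w.length := by
    rw [← hc]
    have := Finset.le_card_sdiff w.edges.toFinset (touch u v)
    have h2 : (touch u v).card ≤ (touch u v \ w.edges.toFinset).card + w.edges.toFinset.card := by
      omega
    exact_mod_cast h2
  have hnR : (1000 : ℝ) ≤ n := by exact_mod_cast hn
  have hd : 0 ≤ (n : ℝ) * p := by positivity
  unfold badTrail
  by_cases huv : u = v
  · subst huv
    have hcard : ((touch u u).card : ℝ) = n - 1 := by
      rw [touch_card_self, Nat.cast_sub (by omega)]; simp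
    have := prob_le h0 h1 w.edges.toFinset (touch u u) hS hT (n * p / 100) (0.99 * n)
      (by linarith)
    rw [hc] at this
    simp only [if_true]
    refine this.trans ?_
    refine mul_le_mul_of_nonneg_left ?_ (by positivity)
    rw [Real.exp_le_exp]
    nlinarith
  · have hcard : 2 * ((n : ℝ) - 1) ≤ (touch u v).card + 1 := by
      have := touch_card u v huv
      have h3 : 2 * n ≤ (touch u v).card + 3 := by omega
      have h4 : (2 : ℝ) * n ≤ (touch u v).card + 3 := by exact_mod_cast h3
      linarith
    have := prob_le h0 h1 w.edges.toFinset (touch u v) hS hT (n * p / 50) (1.99 * n)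
      (by linarith)
    rw [hc] at this
    simp only [if_neg huv]
    refine this.trans ?_
    refine mul_le_mul_of_nonneg_left ?_ (by positivity)
    rw [Real.exp_le_exp]
    nlinarith

/-- Some bad trail of length `k+1` with `k < K`. -/
def someBad (n K : ℕ) (d : ℝ) (G : SimpleGraph (Fin n)) : Prop :=
  ∃ k ∈ Finset.range K, ∃ u ∈ (Finset.univ : Finset (Fin n)), ∃ v ∈ (Finset.univ : Finset (Fin n)),
    ∃ w ∈ ((⊤ : SimpleGraph (Fin n)).finsetWalkLength (k + 1) u v).filter (fun w => w.IsTrail),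
      badTrail d u v w G

lemma someBad_prob {n K : ℕ} {p : ℝ} (h0 : 0 ≤ p) (h1 : p ≤ 1)
    (hn : 1000 ≤ n) (hK : (K : ℝ) ≤ 0.001 * n) :
    gnpProb n p (someBad n K (n * p)) ≤ ∑ k ∈ Finset.range K,
      ((n * p) ^ (k + 1) * Real.exp (-(0.93 * (n * p))) +
        n * ((n * p) ^ (k + 1) * Real.exp (-(1.87 * (n * p))))) := by
  unfold someBad
  refine (union_bound h0 h1 _ _).trans (Finset.sum_le_sum ?_)
  intro k hk
  set X := Real.exp (-(0.93 * (n * p))) with hX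
  set Y := Real.exp (-(1.87 * (n * p))) with hY
  have hX0 : 0 ≤ X := (Real.exp_pos _).le
  have hY0 : 0 ≤ Y := (Real.exp_pos _).le
  have hkK : (k : ℝ) + 1 ≤ K := by
    have := Finset.mem_range.mp hk
    exact_mod_cast this
  have huv : ∀ u v : Fin n, gnpProb n p (fun G =>
      ∃ w ∈ ((⊤ : SimpleGraph (Fin n)).finsetWalkLength (k + 1) u v).filter (fun w => w.IsTrail),
      badTrail (n * p) u v w G) ≤ (n : ℝ) ^ k * (p ^ (k + 1) * (if u = v then X else 0) +
        p ^ (k + 1) * Y) := by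
    intro u v
    refine (union_bound h0 h1 _ _).trans ?_
    have hb : ∀ w ∈ ((⊤ : SimpleGraph (Fin n)).finsetWalkLength (k + 1) u v).filter
        (fun w => w.IsTrail), gnpProb n p (badTrail (n * p) u v w) ≤
        (p ^ (k + 1) * (if u = v then X else 0) + p ^ (k + 1) * Y) := by
      intro w hw
      rw [Finset.mem_filter, SimpleGraph.mem_finsetWalkLength_iff] at hw
      have := badTrail_prob h0 h1 w hw.2 hn (by rw [hw.1]; push_cast; linarith)
      rw [hw.1] at this
      refine this.trans ?_
      have hpk : 0 ≤ p ^ (k + 1) := by positivity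
      split_ifs <;> nlinarith
    refine (Finset.sum_le_card_nsmul _ _ _ hb).trans ?_
    rw [nsmul_eq_mul]
    refine mul_le_mul_of_nonneg_right ?_ ?_
    · have := (Finset.card_filter_le ((⊤ : SimpleGraph (Fin n)).finsetWalkLength (k + 1) u v)
        (fun w => w.IsTrail)).trans (card_walks k u v)
      exact_mod_cast this
    · split_ifs <;> positivity
  refine (union_bound h0 h1 _ _).trans ?_
  have hu : ∀ u ∈ (Finset.univ : Finset (Fin n)), gnpProb n p (fun G =>
      ∃ v ∈ (Finset.univ : Finset (Fin n)),
      ∃ w ∈ ((⊤ : SimpleGraph (Fin n)).finsetWalkLength (k + 1) u v).filter (fun w => w.IsTrail),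
      badTrail (n * p) u v w G) ≤ (n : ℝ) ^ k * p ^ (k + 1) * X +
        n * ((n : ℝ) ^ k * p ^ (k + 1) * Y) := by
    intro u _
    refine (union_bound h0 h1 _ _).trans ?_
    refine (Finset.sum_le_sum (fun v _ => huv u v)).trans ?_
    rw [← Finset.mul_sum, Finset.sum_add_distrib, ← Finset.mul_sum, Finset.sum_ite_eq,
      if_pos (Finset.mem_univ _), Finset.sum_const, Finset.card_univ, Fintype.card_fin,
      nsmul_eq_mul]
    apply le_of_eq
    ring
  refine (Finset.sum_le_card_nsmul _ _ _ hu).trans ?_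
  rw [Finset.card_univ, Fintype.card_fin, nsmul_eq_mul]
  apply le_of_eq
  rw [mul_pow]
  ring

lemma exists_bad {n K : ℕ} {d t : ℝ} (ht : t ≤ d / 100) (G : SimpleGraph (Fin n))
    {u v : Fin n} (hu : u ∈ lowDegSet n t G) (hv : v ∈ lowDegSet n t G) (q : G.Walk u v)
    (hq : q.IsTrail) (h0 : 0 < q.length) (hK : q.length ≤ K) : someBad n K d G := by
  obtain ⟨k, hk⟩ : ∃ k, q.length = k + 1 := ⟨q.length - 1, by omega⟩
  refine ⟨k, Finset.mem_range.mpr (by omega), u, Finset.mem_univ _, v, Finset.mem_univ _,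
    q.mapLe le_top, ?_, ?_, ?_⟩
  · rw [Finset.mem_filter, SimpleGraph.mem_finsetWalkLength_iff]
    refine ⟨?_, ?_⟩
    · rw [SimpleGraph.Walk.mapLe, SimpleGraph.Walk.length_map, hk]
    · rw [SimpleGraph.Walk.isTrail_mapLe]
      exact hq
  · intro e he
    rw [List.mem_toFinset, SimpleGraph.Walk.edges_mapLe_eq_edges] at he
    rw [SimpleGraph.mem_edgeFinset]
    exact q.edges_subset_edgeSet he
  · have hle := Finset.card_le_card (touch_inter u v G)
    simp only [lowDegSet, Finset.mem_filter, Finset.mem_univ, true_and] at hu hv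
    split_ifs with h
    · subst h
      rw [Finset.union_self, SimpleGraph.card_incidenceFinset_eq_degree] at hle
      have : ((touch u u ∩ G.edgeFinset).card : ℝ) ≤ G.degree u := by exact_mod_cast hle
      linarith
    · have h2 := hle.trans (Finset.card_union_le _ _)
      rw [SimpleGraph.card_incidenceFinset_eq_degree,
        SimpleGraph.card_incidenceFinset_eq_degree] at h2
      have : ((touch u v ∩ G.edgeFinset).card : ℝ) ≤ G.degree u + G.degree v := by
        exact_mod_cast h2
      linarith

lemma final_bound {n : ℕ} {p : ℝ} (h0 : 0 ≤ p) (h1 : p ≤ 1)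
    (hp : Real.log n / n ≤ p) (hn : 1000 ≤ n) (hlog : Real.log n ≤ 0.001 * n)
    (hll : 1 ≤ Real.log (Real.log n)) :
    gnpProb n p (someBad n ⌊2 * Real.log n / (3 * Real.log (Real.log n))⌋₊ (n * p)) ≤
      2 * Real.log n * Real.exp (-(Real.log n / 5)) := by
  have hnR : (1000 : ℝ) ≤ n := by exact_mod_cast hn
  have hn0 : (0 : ℝ) < n := by linarith
  have hx0 : 0 < Real.log n := Real.log_pos (by linarith)
  have hexp : (n : ℝ) = Real.exp (Real.log n) := (Real.exp_log hn0).symm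
  set x := Real.log n with hx
  set d := (n : ℝ) * p with hd
  have hdx : x ≤ d := by
    rw [div_le_iff₀ hn0] at hp
    rw [hd]; linarith
  set L := 2 * x / (3 * Real.log x) with hL
  have hL0 : 0 ≤ L := by positivity
  have hLx : L ≤ x := by
    rw [hL, div_le_iff₀ (by positivity)]
    nlinarith
  have hKL : ((⌊L⌋₊ : ℕ) : ℝ) ≤ L := Nat.floor_le hL0
  refine (someBad_prob h0 h1 hn (by linarith)).trans ?_
  have hterm : ∀ k ∈ Finset.range ⌊L⌋₊,
      (d ^ (k + 1) * Real.exp (-(0.93 * d)) + n * (d ^ (k + 1) * Real.exp (-(1.87 * d)))) ≤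
        2 * Real.exp (-(x / 5)) := by
    intro k hk
    have hkK : ((k + 1 : ℕ) : ℝ) ≤ L := by
      have h2 : k + 1 ≤ ⌊L⌋₊ := Finset.mem_range.mp hk
      have h3 : ((k + 1 : ℕ) : ℝ) ≤ (⌊L⌋₊ : ℕ) := by exact_mod_cast h2
      linarith
    have a1 := analytic (c := 0.93) hll hx0 hdx (by norm_num) hkK
    have a2 := analytic (c := 1.87) hll hx0 hdx (by norm_num) hkK
    have b1 : d ^ (k + 1) * Real.exp (-(0.93 * d)) ≤ Real.exp (-(x / 5)) := by
      refine (mul_le_mul_of_nonneg_right a1 (Real.exp_pos _).le).trans ?_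
      rw [← Real.exp_add, Real.exp_le_exp]
      linarith
    have b2 : n * (d ^ (k + 1) * Real.exp (-(1.87 * d))) ≤ Real.exp (-(x / 5)) := by
      refine (mul_le_mul_of_nonneg_left
        (mul_le_mul_of_nonneg_right a2 (Real.exp_pos _).le) hn0.le).trans ?_
      rw [hexp, ← Real.exp_add, ← Real.exp_add, Real.exp_le_exp]
      linarith
    linarith
  refine (Finset.sum_le_card_nsmul _ _ _ hterm).trans ?_
  rw [Finset.card_range, nsmul_eq_mul]
  have := Real.exp_pos (-(x / 5))
  nlinarith

/-- Claim 4.4: for `p ≥ ln n / n` and `t ≤ np/100`, w.h.p. `G ~ G(n,p)` contains no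
non-empty path of length at most `2 ln n / (3 ln ln n)` with both (possibly identical)
endpoints in `D_t(G)`. -/
theorem stmt10 (p : ℕ → ℝ) (t : ℕ → ℝ) (hp0 : ∀ n, 0 ≤ p n) (hp1 : ∀ n, p n ≤ 1)
    (hp : ∀ n : ℕ, Real.log n / n ≤ p n) (ht : ∀ n : ℕ, t n ≤ n * p n / 100) :
    WHP p (fun n G =>
      (∀ u ∈ lowDegSet n (t n) G, ∀ v ∈ lowDegSet n (t n) G,
        ∀ q : G.Walk u v, q.IsPath → 0 < q.length →
          2 * Real.log n / (3 * Real.log (Real.log n)) < (q.length : ℝ)) ∧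
      (∀ u ∈ lowDegSet n (t n) G, ∀ q : G.Walk u u, q.IsCycle →
        2 * Real.log n / (3 * Real.log (Real.log n)) < (q.length : ℝ))) := by
  have hlim : Tendsto (fun n : ℕ => Real.log n) atTop atTop :=
    Real.tendsto_log_atTop.comp tendsto_natCast_atTop_atTop
  have hllim : Tendsto (fun n : ℕ => Real.log (Real.log n)) atTop atTop :=
    Real.tendsto_log_atTop.comp hlim
  have hsmall : ∀ᶠ n : ℕ in atTop, Real.log n ≤ 0.001 * n := by
    have h := (Real.isLittleO_log_id_atTop.comp_tendsto
      (tendsto_natCast_atTop_atTop (R := ℝ))).bound (show (0 : ℝ) < 0.001 by norm_num)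
    filter_upwards [h] with n hn
    simp only [Function.comp, id, Real.norm_eq_abs, Nat.abs_cast] at hn
    exact (le_abs_self _).trans hn
  have hz : Tendsto (fun n : ℕ => 2 * Real.log n * Real.exp (-(Real.log n / 5))) atTop
      (nhds 0) := by
    have h := ((Real.tendsto_pow_mul_exp_neg_atTop_nhds_zero 1).comp
      (hlim.atTop_div_const (show (0 : ℝ) < 5 by norm_num))).const_mul 10
    rw [mul_zero] at h
    refine h.congr ?_
    intro n
    simp only [Function.comp, pow_one]
    ring
  unfold WHP
  have hlow : Tendsto (fun n : ℕ => 1 - 2 * Real.log n * Real.exp (-(Real.log n / 5))) atTop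
      (nhds 1) := by
    simpa using hz.const_sub 1
  refine tendsto_of_tendsto_of_tendsto_of_le_of_le' hlow tendsto_const_nhds ?_ ?_
  · filter_upwards [hsmall, hllim.eventually_ge_atTop 1, eventually_ge_atTop 1000]
      with n hn1 hn2 hn3
    rw [gnpProb_not]
    have hb := final_bound (hp0 n) (hp1 n) (hp n) hn3 hn1 hn2
    refine sub_le_sub_left (le_trans (gnpProb_mono (hp0 n) (hp1 n) ?_) hb) 1
    intro G hG
    rw [not_and_or] at hG
    push Not at hG
    rcases hG with ⟨u, hu, v, hv, q, hq, h0, hlen⟩ | ⟨u, hu, q, hq, hlen⟩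
    · exact exists_bad (ht n) G hu hv q hq.isTrail h0 (Nat.le_floor hlen)
    · exact exists_bad (ht n) G hu hu q hq.isTrail (by have := hq.three_le_length; omega)
        (Nat.le_floor hlen)
  · refine Eventually.of_forall ?_
    intro n
    dsimp only
    rw [gnpProb_not]
    have := gnpProb_nonneg (hp0 n) (hp1 n) (fun G => ¬ ((∀ u ∈ lowDegSet n (t n) G,
        ∀ v ∈ lowDegSet n (t n) G,
        ∀ q : G.Walk u v, q.IsPath → 0 < q.length →
          2 * Real.log n / (3 * Real.log (Real.log n)) < (q.length : ℝ)) ∧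
      (∀ u ∈ lowDegSet n (t n) G, ∀ q : G.Walk u u, q.IsCycle →
        2 * Real.log n / (3 * Real.log (Real.log n)) < (q.length : ℝ))))
    linarith
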